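/- arXiv:1607.06883 — 2 statements merged into one kernel-verified Lean document; each statement's English description precedes it below -/
import Mathlib

section
/- There exists a constant c > 0 such that every finite tree T on n ≥ 1 vertices admits a partition of its vertex set into at most ⌈√n⌉ parts, each of which induces a connected subtree of T of unweighted diameter at most c·√n. -/
/-!
Root the graph at `r` and let `R = ⌊√n⌋`. As long as some remaining vertex is at distance more
than `R` from `r`, take a farthest one `w`, walk `R` steps from `w` towards `r` to reach a vertex
`c`, and cut off all remaining vertices that `r` sees through `c`. This part has radius at most `R`
around `c`, because `w` was farthest, and contains the `R + 1` vertices between `c` and `w`.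
Both the part and the remainder are closed under taking shortest paths from their centres, so the
procedure can be iterated; all parts except possibly the last have more than `√n` vertices, whence
at most `⌈√n⌉` parts.
-/

section

variable {V : Type*} {G : SimpleGraph V} {r c u v : V} {S : Set V} {R : ℕ}

/-- The metric interval between `u` and `v`: in a connected graph, the set of all vertices on
shortest paths from `u` to `v`. -/
def geodesicInterval (G : SimpleGraph V) (u v : V) : Set V :=
  {w | G.dist u w + G.dist w v = G.dist u v}

/-- The vertices seen from `r` through `c`. In a tree these are the descendants of `c` for the
root `r`. -/
def geodesicCone (G : SimpleGraph V) (r c : V) : Set V :=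
  {v | c ∈ geodesicInterval G r v}

/-- A set of vertices is star-shaped about `r` if it contains all shortest paths from `r` to its
elements. In a tree rooted at `r` these are the sets closed under taking parents. -/
def IsStarShaped (G : SimpleGraph V) (r : V) (S : Set V) : Prop :=
  ∀ ⦃v⦄, v ∈ S → geodesicInterval G r v ⊆ S

theorem left_mem_geodesicInterval : u ∈ geodesicInterval G u v := by
  simp [geodesicInterval]

theorem mem_geodesicInterval_of_mem_support {p : G.Walk u v} (hp : p.length = G.dist u v)
    {w : V} (hw : w ∈ p.support) : w ∈ geodesicInterval G u v := by
  obtain ⟨q, q', rfl⟩ := SimpleGraph.Walk.mem_support_iff_exists_append.1 hw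
  refine le_antisymm ?_ (q.reachable.dist_triangle_left v)
  rw [← hp, SimpleGraph.Walk.length_append]
  exact add_le_add (SimpleGraph.dist_le q) (SimpleGraph.dist_le q')

theorem exists_mem_geodesicInterval_dist_eq (huv : G.Reachable u v) {k : ℕ}
    (hk : k ≤ G.dist u v) : ∃ w ∈ geodesicInterval G u v, G.dist w v = k := by
  obtain ⟨p, hp⟩ := huv.exists_walk_length_eq_dist
  refine ⟨p.getVert (p.length - k),
    mem_geodesicInterval_of_mem_support hp (p.getVert_mem_support _), ?_⟩
  rw [← SimpleGraph.length_eq_dist_of_subwalk hp (p.isSubwalk_drop (p.length - k)),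
    SimpleGraph.Walk.drop_length]
  lia

theorem geodesicInterval_subset_of_mem_left (hG : G.Connected)
    (hc : c ∈ geodesicInterval G u v) : geodesicInterval G c v ⊆ geodesicInterval G u v := by
  intro w (hw : G.dist c w + G.dist w v = G.dist c v)
  have huw : G.dist u w ≤ G.dist u c + G.dist c w := hG.dist_triangle
  have huv : G.dist u v ≤ G.dist u w + G.dist w v := hG.dist_triangle
  change G.dist u c + G.dist c v = G.dist u v at hc
  change G.dist u w + G.dist w v = G.dist u v
  lia

theorem geodesicInterval_comm : geodesicInterval G u v = geodesicInterval G v u := by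
  ext w
  simp only [geodesicInterval, Set.mem_ofPred_eq, G.dist_comm (u := u), G.dist_comm (v := v),
    add_comm]

theorem geodesicInterval_subset_of_mem_right (hG : G.Connected)
    (hc : c ∈ geodesicInterval G u v) : geodesicInterval G u c ⊆ geodesicInterval G u v := by
  rw [geodesicInterval_comm (v := c), geodesicInterval_comm (v := v)]
  rw [geodesicInterval_comm] at hc
  exact geodesicInterval_subset_of_mem_left hG hc

theorem geodesicInterval_subset_geodesicCone (hG : G.Connected)
    (hc : c ∈ geodesicInterval G r v) : geodesicInterval G c v ⊆ geodesicCone G r c := by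
  intro w (hw : G.dist c w + G.dist w v = G.dist c v)
  have hrw : G.dist r w ≤ G.dist r c + G.dist c w := hG.dist_triangle
  have hrv : G.dist r v ≤ G.dist r w + G.dist w v := hG.dist_triangle
  change G.dist r c + G.dist c v = G.dist r v at hc
  change G.dist r c + G.dist c w = G.dist r w
  lia

namespace IsStarShaped

theorem center_mem (hS : IsStarShaped G r S) (hne : S.Nonempty) : r ∈ S :=
  hS hne.some_mem left_mem_geodesicInterval

theorem inter_geodesicCone (hG : G.Connected) (hS : IsStarShaped G r S) (c : V) :
    IsStarShaped G c (S ∩ geodesicCone G r c) := fun _ hv ↦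
  Set.subset_inter ((geodesicInterval_subset_of_mem_left hG hv.2).trans (hS hv.1))
    (geodesicInterval_subset_geodesicCone hG hv.2)

theorem sdiff_geodesicCone (hG : G.Connected) (hS : IsStarShaped G r S) (c : V) :
    IsStarShaped G r (S \ geodesicCone G r c) := fun _ hv _ hu ↦
  ⟨hS hv.1 hu, fun hc ↦ hv.2 (geodesicInterval_subset_of_mem_right hG hu hc)⟩

theorem exists_walk_support_subset (hS : IsStarShaped G r S) (hv : v ∈ S)
    (hrv : G.Reachable r v) :
    ∃ p : G.Walk r v, p.length = G.dist r v ∧ ∀ u ∈ p.support, u ∈ S := by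
  obtain ⟨p, hp⟩ := hrv.exists_walk_length_eq_dist
  exact ⟨p, hp, fun u hu ↦ hS hv (mem_geodesicInterval_of_mem_support hp hu)⟩

theorem radius_induce_le (hG : G.Connected) (hS : IsStarShaped G r S) (hne : S.Nonempty)
    (hR : ∀ v ∈ S, G.dist r v ≤ R) : (G.induce S).radius ≤ R := by
  let center : S := ⟨r, hS.center_mem hne⟩
  refine (SimpleGraph.radius_le_eccent (u := center)).trans (iSup_le fun v ↦ ?_)
  obtain ⟨p, hp, hpS⟩ := hS.exists_walk_support_subset v.2 (hG r v)
  have hlength : (p.induce S hpS).length = p.length :=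
    ((p.induce S hpS).length_map _).symm.trans
      (congrArg SimpleGraph.Walk.length (p.map_induce hpS))
  calc (G.induce S).edist center v
    _ ≤ (p.induce S hpS).length := SimpleGraph.edist_le _
    _ = G.dist r v := by rw [hlength, hp]
    _ ≤ R := by exact_mod_cast hR v v.2

theorem dist_lt_ncard (hG : G.Connected) (hS : IsStarShaped G r S) (hfin : S.Finite)
    (hv : v ∈ S) : G.dist r v < S.ncard := by
  classical
  obtain ⟨p, hp, hpS⟩ := hS.exists_walk_support_subset hv (hG r v)
  calc G.dist r v
    _ < p.support.length := by rw [p.length_support, hp]; exact Nat.lt_succ_self _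
    _ = (p.support.toFinset : Set V).ncard := by
      rw [Set.ncard_coe_finset,
        List.toFinset_card_of_nodup (p.isPath_of_length_eq_dist hp).support_nodup]
    _ ≤ S.ncard := Set.ncard_le_ncard (fun u hu ↦ hpS u (by simpa using hu)) hfin

theorem exists_cone_radius_le (hG : G.Connected) (hS : IsStarShaped G r S) (hfin : S.Finite)
    (hR : ∃ v ∈ S, R < G.dist r v) :
    ∃ c, (G.induce (S ∩ geodesicCone G r c)).radius ≤ R ∧
      R < (S ∩ geodesicCone G r c).ncard := by
  obtain ⟨v, hv, hRv⟩ := hR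
  obtain ⟨w, hw, hmax⟩ := S.exists_max_image (G.dist r) hfin ⟨v, hv⟩
  obtain ⟨c, hcw, hdist⟩ := exists_mem_geodesicInterval_dist_eq (hG r w)
    (hRv.le.trans (hmax v hv))
  have hstar := hS.inter_geodesicCone hG c
  refine ⟨c, hstar.radius_induce_le hG ⟨w, hw, hcw⟩ fun u hu ↦ ?_,
    hdist ▸ hstar.dist_lt_ncard hG (hfin.inter_of_left _) ⟨hw, hcw⟩⟩
  have hcu : G.dist r c + G.dist c u = G.dist r u := hu.2
  have huw : G.dist r u ≤ G.dist r w := hmax u hu.1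
  change G.dist r c + G.dist c w = G.dist r w at hcw
  lia

theorem exists_finpartition_radius_le (hG : G.Connected) (hS : IsStarShaped G r S)
    (hfin : S.Finite) (R : ℕ) :
    ∃ P : Finpartition S, P.parts.card * (R + 1) ≤ S.ncard + R ∧
      ∀ F ∈ P.parts, (G.induce F).radius ≤ R := by
  classical
  induction hn : S.ncard using Nat.strong_induction_on generalizing S with | _ n ih
  subst hn
  obtain rfl | hne := S.eq_empty_or_nonempty
  · exact ⟨Finpartition.empty _, by simp⟩
  by_cases hR : ∃ v ∈ S, R < G.dist r v
  · obtain ⟨c, hradius, hcard⟩ := hS.exists_cone_radius_le hG hfin hR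
    have hsum := Set.ncard_inter_add_ncard_sdiff_eq_ncard S (geodesicCone G r c) hfin
    obtain ⟨P, hPcard, hP⟩ := ih _ (by lia) (hS.sdiff_geodesicCone hG c) hfin.sdiff rfl
    refine ⟨P.extend (b := S ∩ geodesicCone G r c)
      (Set.nonempty_of_ncard_ne_zero (by lia)).ne_empty
      Set.disjoint_sdiff_inter (Set.sdiff_union_inter _ _), ?_, ?_⟩
    · rw [P.card_extend]
      lia
    · exact Finset.forall_mem_insert _ _ _ |>.2 ⟨hradius, hP⟩
  · push Not at hR
    refine ⟨Finpartition.indiscrete hne.ne_empty, ?_, ?_⟩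
    · have := hne.ncard_pos hfin
      simp only [Finpartition.indiscrete_parts, Finset.card_singleton]
      lia
    · simpa using hS.radius_induce_le hG hne hR

end IsStarShaped

theorem connected_of_radius_le (h : G.radius ≤ R) : G.Connected := by
  by_contra hG
  rw [SimpleGraph.radius_eq_top_of_not_connected hG] at h
  exact ENat.natCast_ne_top R (top_le_iff.1 h)

theorem diam_le_two_mul_of_radius_le (h : G.radius ≤ R) : G.diam ≤ 2 * R := by
  refine ENat.toNat_le_of_le_natCast (SimpleGraph.ediam_le_two_mul_radius.trans ?_)
  push_cast
  gcongr

end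

theorem le_ceil_sqrt_of_mul_le {k n : ℕ}
    (h : k * (⌊Real.sqrt n⌋₊ + 1) ≤ n + ⌊Real.sqrt n⌋₊) : k ≤ ⌈Real.sqrt n⌉₊ := by
  have hn : n ≤ ⌈Real.sqrt n⌉₊ * (⌊Real.sqrt n⌋₊ + 1) := by
    rify
    calc (n : ℝ) = Real.sqrt n * Real.sqrt n := (Real.mul_self_sqrt n.cast_nonneg).symm
      _ ≤ ⌈Real.sqrt n⌉₊ * (⌊Real.sqrt n⌋₊ + 1) := by
        gcongr
        · exact Nat.le_ceil _
        · exact (Nat.lt_floor_add_one _).le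
  refine Nat.lt_succ_iff.1 (Nat.lt_of_mul_lt_mul_right (a := ⌊Real.sqrt n⌋₊ + 1) ?_)
  lia

theorem tree_partition_exists_general {V : Type*} [Fintype V] {G : SimpleGraph V}
    (hG : G.Connected) :
    ∃ P : Finset (Set V),
      Setoid.IsPartition (↑P : Set (Set V)) ∧
      P.card ≤ ⌈Real.sqrt (Fintype.card V)⌉₊ ∧
      ∀ F ∈ P, (G.induce F).Connected ∧
        ((G.induce F).diam : ℝ) ≤ 2 * Real.sqrt (Fintype.card V) := by
  obtain ⟨r⟩ := hG.nonempty
  have huniv : IsStarShaped G r Set.univ := fun _ _ ↦ Set.subset_univ _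
  obtain ⟨P, hcard, hradius⟩ := huniv.exists_finpartition_radius_le hG Set.finite_univ
    ⌊Real.sqrt (Fintype.card V)⌋₊
  rw [Set.ncard_univ, Nat.card_eq_fintype_card] at hcard
  refine ⟨P.parts, P.isPartition_parts, le_ceil_sqrt_of_mul_le hcard, fun F hF ↦
    ⟨connected_of_radius_le (hradius F hF), ?_⟩⟩
  calc ((G.induce F).diam : ℝ)
    _ ≤ 2 * ⌊Real.sqrt (Fintype.card V)⌋₊ := by
      exact_mod_cast diam_le_two_mul_of_radius_le (hradius F hF)
    _ ≤ 2 * Real.sqrt (Fintype.card V) := by gcongr; exact Nat.floor_le (Real.sqrt_nonneg _)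

/-- There is a constant `c > 0` such that every finite tree `T` on `n ≥ 1` vertices admits a
partition of its vertex set into at most `⌈√n⌉` parts, each of which induces a connected
subtree of `T` of unweighted diameter at most `c·√n`. -/
theorem tree_partition_exists :
    ∃ c : ℝ, 0 < c ∧
      ∀ (V : Type) [Fintype V] (T : SimpleGraph V), T.IsTree → 1 ≤ Fintype.card V →
      ∃ P : Finset (Set V),
        Setoid.IsPartition (↑P : Set (Set V)) ∧
        P.card ≤ ⌈Real.sqrt (Fintype.card V)⌉₊ ∧
        ∀ F ∈ P, (T.induce F).Connected ∧
          ((T.induce F).diam : ℝ) ≤ c * Real.sqrt (Fintype.card V) :=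
  ⟨2, two_pos, fun _ _ _ hT _ ↦ tree_partition_exists_general hT.connected⟩
end

section
/- Let G be a finite connected simple graph and P a partition of the vertex set of G into parts, each inducing a connected subgraph of G and each of weak diameter at most D₀ in G. Let d ≤ D₀, let A be the set of parts of P of weak diameter at most d, and for each F ∈ A let e(F) be an edge of G with exactly one endpoint in F. Let H be the fragment graph, S the set of selected H-edges, M a matching of H contained in S that is maximal among matchings contained in S, and K the marked edge set. Then every connected component C of the spanning subgraph of H with edge set K satisfies: (a) C contains at most one part of weak diameter greater than d, and (b) the union of the parts lying in C has weak diameter at most D₀ + 3d + 3 in G. -/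
/- A partition of the vertex set of `G` is modeled by a surjection `f : V → ι`;
the parts are the fibers `f ⁻¹' {i}`. `A : Set ι` is a set of parts, and for
each part `i ∈ A`, `e i : V × V` is a selected edge of `G` with exactly one
endpoint in the part `i` (namely `(e i).1`). -/

/-- The fragment graph `H`: its vertices are the parts, and two distinct parts are
adjacent iff some selected edge has one endpoint in each of them. -/
def fragmentGraph {V ι : Type*} (f : V → ι) (A : Set ι) (e : ι → V × V) : SimpleGraph ι :=
  SimpleGraph.fromRel (fun i j => ∃ k ∈ A, f (e k).1 = i ∧ f (e k).2 = j)

/-- The set `S` of `H`-edges arising from the selected edges. -/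
def selectedEdges {V ι : Type*} (f : V → ι) (A : Set ι) (e : ι → V × V) : Set (Sym2 ι) :=
  {s | ∃ k ∈ A, s = s(f (e k).1, f (e k).2)}

/-- `M` is a matching of the graph `H`: a set of edges of `H`, no two distinct edges of
which share an endpoint. -/
def IsMatchingIn {ι : Type*} (H : SimpleGraph ι) (M : Set (Sym2 ι)) : Prop :=
  M ⊆ H.edgeSet ∧ ∀ e₁ ∈ M, ∀ e₂ ∈ M, e₁ ≠ e₂ → ∀ x : ι, x ∈ e₁ → x ∉ e₂

/-- A part `i` is covered by the matching `M` if it is an endpoint of some edge of `M`. -/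
def coveredBy {ι : Type*} (M : Set (Sym2 ι)) (i : ι) : Prop := ∃ s ∈ M, i ∈ s

/-- The marked edge set `K`: the matching `M` together with, for each part of `A` not
covered by `M`, the `H`-edge arising from its selected edge. -/
def markedEdges {V ι : Type*} (f : V → ι) (A : Set ι) (e : ι → V × V)
    (M : Set (Sym2 ι)) : Set (Sym2 ι) :=
  M ∪ {s | ∃ k ∈ A, ¬ coveredBy M k ∧ s = s(f (e k).1, f (e k).2)}

/-- The vertex subset `s` has weak diameter at most `d` in `G`: every two of its
vertices are at distance at most `d` in `G`. -/
def WeakDiamLE {V : Type*} (G : SimpleGraph V) (s : Set V) (d : ℕ) : Prop :=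
  ∀ u ∈ s, ∀ v ∈ s, G.dist u v ≤ d

/-! By maximality of `M`, the selected edge of a part of `A` not covered by `M` leads to a
covered part. Hence a component of the marked graph is either a single part or lies in a double
star: the two ends of one matching edge, together with uncovered parts of `A` pendant at either
end. The matching edge is the selected edge of some `a ∈ A`, so only its other end can be outside
`A`, and the two ends have joint weak diameter at most `d + D + 1`. Every pendant part lies within
`d + 1` of them, which adds `2 * (d + 1)`. -/

section Matching

variable {ι : Type*} {H : SimpleGraph ι} {M S : Set (Sym2 ι)} {i j : ι}

theorem IsMatchingIn.eq_of_mem_of_mem (hM : IsMatchingIn H M) {s t : Sym2 ι} (hs : s ∈ M)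
    (ht : t ∈ M) (his : i ∈ s) (hit : i ∈ t) : s = t :=
  by_contra fun hne => hM.2 s hs t ht hne i his hit

theorem IsMatchingIn.insert (hM : IsMatchingIn H M) (hij : H.Adj i j) (hi : ¬ coveredBy M i)
    (hj : ¬ coveredBy M j) : IsMatchingIn H (insert s(i, j) M) := by
  have hdisj : ∀ t ∈ M, ∀ x ∈ s(i, j), x ∉ t := by
    rintro t ht x hx hxt
    rcases Sym2.mem_iff.1 hx with rfl | rfl
    exacts [hi ⟨t, ht, hxt⟩, hj ⟨t, ht, hxt⟩]
  refine ⟨Set.insert_subset hij hM.1, ?_⟩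
  rintro s (rfl | hs) t (rfl | ht) hne x hxs hxt
  · exact hne rfl
  · exact hdisj t ht x hxs hxt
  · exact hdisj s hs x hxt hxs
  · exact hM.2 s hs t ht hne x hxs hxt

/-- `M` is a matching of `H` contained in `S`, inclusion-maximal among such matchings. -/
abbrev IsMaximalMatchingIn (H : SimpleGraph ι) (S M : Set (Sym2 ι)) : Prop :=
  Maximal (fun N => IsMatchingIn H N ∧ N ⊆ S) M

theorem IsMaximalMatchingIn.coveredBy_or_coveredBy (hM : IsMaximalMatchingIn H S M)
    (hij : H.Adj i j) (hS : s(i, j) ∈ S) : coveredBy M i ∨ coveredBy M j := by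
  by_contra! ⟨hi, hj⟩
  have hmem : s(i, j) ∈ M :=
    hM.mem_of_prop_insert ⟨hM.prop.1.insert hij hi hj, Set.insert_subset hS hM.prop.2⟩
  exact hi ⟨_, hmem, Sym2.mem_mk_left i j⟩

end Matching

theorem supp_subset_of_forall_adj {ι : Type*} {H : SimpleGraph ι} {C : H.ConnectedComponent}
    {Q : Set ι} {i : ι} (hi : i ∈ C.supp) (hiQ : i ∈ Q)
    (hQ : ∀ j ∈ Q, ∀ k, H.Adj j k → k ∈ Q) : C.supp ⊆ Q := by
  intro j hj
  obtain ⟨w⟩ := C.reachable_of_mem_supp hi hj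
  by_contra hjQ
  obtain ⟨b, -, hb, hb'⟩ := w.exists_boundary_dart Q hiQ hjQ
  exact hb' (hQ _ hb _ b.adj)

section DoubleStar

variable {V ι : Type*} {f : V → ι} {A : Set ι} {e : ι → V × V} {M : Set (Sym2 ι)} {i j : ι}

/-- The part `i` is pendant at the part `j`: it is a part of `A` not covered by `M`, and its
selected edge leads to `j`. These are the pairs contributing the edges of `K` outside `M`. -/
def IsPendantAt (f : V → ι) (A : Set ι) (e : ι → V × V) (M : Set (Sym2 ι)) (i j : ι) : Prop :=
  i ∈ A ∧ ¬ coveredBy M i ∧ f (e i).2 = j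

/-- The double star around the edge `s`: the ends of `s` together with the parts pendant at one
of them. -/
def doubleStar (f : V → ι) (A : Set ι) (e : ι → V × V) (M : Set (Sym2 ι)) (s : Sym2 ι) : Set ι :=
  {i | i ∈ s ∨ ∃ j ∈ s, IsPendantAt f A e M i j}

theorem exists_mem_eq_of_mem_selectedEdges (he : ∀ k ∈ A, f (e k).1 = k) {s : Sym2 ι}
    (hs : s ∈ selectedEdges f A e) : ∃ a ∈ A, s = s(a, f (e a).2) := by
  obtain ⟨a, ha, rfl⟩ := hs
  exact ⟨a, ha, by rw [he a ha]⟩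

theorem IsPendantAt.coveredBy (hij : IsPendantAt f A e M i j)
    (hM : IsMaximalMatchingIn (fragmentGraph f A e) (selectedEdges f A e) M)
    (he : ∀ k ∈ A, f (e k).1 = k ∧ f (e k).2 ≠ k) : coveredBy M j := by
  obtain ⟨hi, hiM, rfl⟩ := hij
  obtain ⟨hi₁, hi₂⟩ := he i hi
  have hadj : (fragmentGraph f A e).Adj i (f (e i).2) :=
    (SimpleGraph.fromRel_adj _ _ _).2 ⟨hi₂.symm, .inl ⟨i, hi, hi₁, rfl⟩⟩
  have hsel : s(i, f (e i).2) ∈ selectedEdges f A e := ⟨i, hi, by rw [hi₁]⟩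
  exact (hM.coveredBy_or_coveredBy hadj hsel).resolve_left hiM

theorem mem_or_isPendantAt_of_mem_markedEdges (he : ∀ k ∈ A, f (e k).1 = k)
    (h : s(i, j) ∈ markedEdges f A e M) :
    s(i, j) ∈ M ∨ IsPendantAt f A e M i j ∨ IsPendantAt f A e M j i := by
  refine h.imp_right ?_
  rintro ⟨k, hk, hkM, hijk⟩
  rw [he k hk, Sym2.eq_iff] at hijk
  rcases hijk with ⟨rfl, rfl⟩ | ⟨rfl, rfl⟩
  exacts [.inl ⟨hk, hkM, rfl⟩, .inr ⟨hk, hkM, rfl⟩]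

theorem mem_of_mem_doubleStar_of_coveredBy {s : Sym2 ι} (hi : i ∈ doubleStar f A e M s)
    (hiM : coveredBy M i) : i ∈ s :=
  hi.resolve_right fun ⟨_, _, hpend⟩ => hpend.2.1 hiM

theorem exists_mem_doubleStar_of_mem_markedEdges
    (hM : IsMaximalMatchingIn (fragmentGraph f A e) (selectedEdges f A e) M)
    (he : ∀ k ∈ A, f (e k).1 = k ∧ f (e k).2 ≠ k) (hij : s(i, j) ∈ markedEdges f A e M) :
    ∃ s ∈ M, i ∈ doubleStar f A e M s := by
  rcases mem_or_isPendantAt_of_mem_markedEdges (fun k hk => (he k hk).1) hij with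
    hmem | hpend | hpend
  · exact ⟨_, hmem, .inl (Sym2.mem_mk_left i j)⟩
  · obtain ⟨s, hs, hjs⟩ := hpend.coveredBy hM he
    exact ⟨s, hs, .inr ⟨j, hjs, hpend⟩⟩
  · obtain ⟨s, hs, his⟩ := hpend.coveredBy hM he
    exact ⟨s, hs, .inl his⟩

theorem mem_doubleStar_of_mem_markedEdges
    (hM : IsMaximalMatchingIn (fragmentGraph f A e) (selectedEdges f A e) M)
    (he : ∀ k ∈ A, f (e k).1 = k ∧ f (e k).2 ≠ k) {s : Sym2 ι} (hs : s ∈ M)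
    (hi : i ∈ doubleStar f A e M s) (hij : s(i, j) ∈ markedEdges f A e M) :
    j ∈ doubleStar f A e M s := by
  rcases mem_or_isPendantAt_of_mem_markedEdges (fun k hk => (he k hk).1) hij with
    hmem | hpend | hpend
  · have his : i ∈ s :=
      mem_of_mem_doubleStar_of_coveredBy hi ⟨_, hmem, Sym2.mem_mk_left i j⟩
    have hsij : s = s(i, j) := hM.prop.1.eq_of_mem_of_mem hs hmem his (Sym2.mem_mk_left i j)
    exact .inl (hsij ▸ Sym2.mem_mk_right i j)
  · obtain ⟨j', hj', hpend'⟩ := hi.resolve_left fun his => hpend.2.1 ⟨s, hs, his⟩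
    have hjj' : j = j' := hpend.2.2.symm.trans hpend'.2.2
    exact .inl (hjj' ▸ hj')
  · have his : i ∈ s := mem_of_mem_doubleStar_of_coveredBy hi (hpend.coveredBy hM he)
    exact .inr ⟨i, his, hpend⟩

theorem supp_subsingleton_or_subset_doubleStar
    (hM : IsMaximalMatchingIn (fragmentGraph f A e) (selectedEdges f A e) M)
    (he : ∀ k ∈ A, f (e k).1 = k ∧ f (e k).2 ≠ k)
    (C : (SimpleGraph.fromEdgeSet (markedEdges f A e M)).ConnectedComponent) :
    C.supp.Subsingleton ∨ ∃ a ∈ A, C.supp ⊆ doubleStar f A e M s(a, f (e a).2) := by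
  obtain ⟨i, hi⟩ := C.nonempty_supp
  by_cases hadj : ∃ j, s(i, j) ∈ markedEdges f A e M
  · right
    obtain ⟨j, hij⟩ := hadj
    obtain ⟨s, hs, his⟩ := exists_mem_doubleStar_of_mem_markedEdges hM he hij
    obtain ⟨a, ha, rfl⟩ :=
      exists_mem_eq_of_mem_selectedEdges (fun k hk => (he k hk).1) (hM.prop.2 hs)
    exact ⟨a, ha, supp_subset_of_forall_adj hi his fun _ hk _ hkl =>
      mem_doubleStar_of_mem_markedEdges hM he hs hk hkl.1⟩
  · left
    refine Set.subsingleton_singleton.anti (supp_subset_of_forall_adj hi (Set.mem_singleton i) ?_)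
    rintro _ rfl j hij
    exact absurd ⟨j, hij.1⟩ hadj

theorem doubleStar_sdiff_subset {a : ι} (ha : a ∈ A) :
    doubleStar f A e M s(a, j) \ A ⊆ {j} := by
  rintro i ⟨his | ⟨_, _, hpend⟩, hiA⟩
  · exact (Sym2.mem_iff.1 his).resolve_left fun hia => hiA (hia ▸ ha)
  · exact absurd hpend.1 hiA

end DoubleStar

section WeakDiameter

variable {V : Type*} {G : SimpleGraph V} {s t : Set V} {x y u : V}

/-- The vertex subset `s` has weak diameter at most `d` in `G`, measured with the extended
distance, so that vertices in different components of `G` are at distance `⊤` instead of the junk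
value `0`. -/
def WeakEDiamLE (G : SimpleGraph V) (s : Set V) (d : ℕ∞) : Prop :=
  ∀ u ∈ s, ∀ v ∈ s, G.edist u v ≤ d

theorem weakEDiamLE_natCast_iff (hG : G.Preconnected) {d : ℕ} :
    WeakEDiamLE G s d ↔ WeakDiamLE G s d := by
  simp only [WeakEDiamLE, WeakDiamLE, ← (hG _ _).coe_dist_eq_edist, Nat.cast_le]

variable {c d r : ℕ∞}

theorem WeakEDiamLE.mono (ht : WeakEDiamLE G t c) (hst : s ⊆ t) (hcd : c ≤ d) :
    WeakEDiamLE G s d :=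
  fun u hu v hv => (ht u (hst hu) v (hst hv)).trans hcd

theorem WeakEDiamLE.edist_le_add_one_of_adj (hs : WeakEDiamLE G s d) (hu : u ∈ s) (hx : x ∈ s)
    (hxy : G.Adj x y) : G.edist u y ≤ d + 1 :=
  calc G.edist u y ≤ G.edist u x + G.edist x y := G.edist_triangle
    _ ≤ d + 1 := by gcongr; exacts [hs u hu x hx, (SimpleGraph.edist_eq_one_iff_adj.2 hxy).le]

theorem WeakEDiamLE.union_of_adj (hs : WeakEDiamLE G s c) (ht : WeakEDiamLE G t d) (hx : x ∈ s)
    (hy : y ∈ t) (hxy : G.Adj x y) : WeakEDiamLE G (s ∪ t) (c + d + 1) := by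
  have hcross : ∀ u ∈ s, ∀ v ∈ t, G.edist u v ≤ c + d + 1 := fun u hu v hv =>
    calc G.edist u v ≤ G.edist u y + G.edist y v := G.edist_triangle
      _ ≤ (c + 1) + d := by gcongr; exacts [hs.edist_le_add_one_of_adj hu hx hxy, ht y hy v hv]
      _ = c + d + 1 := by ring
  rintro u (hu | hu) v (hv | hv)
  · exact (hs u hu v hv).trans (by rw [add_assoc]; exact le_self_add)
  · exact hcross u hu v hv
  · exact SimpleGraph.edist_comm.trans_le (hcross v hv u hu)
  · exact (ht u hu v hv).trans (le_add_self.trans le_self_add)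

theorem WeakEDiamLE.of_forall_exists_edist_le (ht : WeakEDiamLE G t d)
    (hst : ∀ u ∈ s, ∃ v ∈ t, G.edist u v ≤ r) : WeakEDiamLE G s (d + 2 * r) := by
  intro u hu v hv
  obtain ⟨x, hx, hux⟩ := hst u hu
  obtain ⟨y, hy, hvy⟩ := hst v hv
  calc G.edist u v ≤ G.edist u x + G.edist x v := G.edist_triangle
    _ ≤ G.edist u x + (G.edist x y + G.edist y v) := by gcongr; exact G.edist_triangle
    _ ≤ r + (d + r) := by
      gcongr
      exacts [ht x hx y hy, SimpleGraph.edist_comm.trans_le hvy]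
    _ = d + 2 * r := by ring

end WeakDiameter

section Fragments

variable {V ι : Type*} {G : SimpleGraph V} {f : V → ι} {A : Set ι} {e : ι → V × V}
  {M : Set (Sym2 ι)} {d D : ℕ∞}

theorem weakEDiamLE_preimage_doubleStar (hD : ∀ i, WeakEDiamLE G (f ⁻¹' {i}) D)
    (hA : ∀ i ∈ A, WeakEDiamLE G (f ⁻¹' {i}) d)
    (he : ∀ i ∈ A, G.Adj (e i).1 (e i).2 ∧ f (e i).1 = i) {a : ι} (ha : a ∈ A) :
    WeakEDiamLE G (f ⁻¹' doubleStar f A e M s(a, f (e a).2)) (D + 3 * d + 3) := by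
  have hcore : WeakEDiamLE G (f ⁻¹' {a} ∪ f ⁻¹' {f (e a).2}) (d + D + 1) :=
    (hA a ha).union_of_adj (hD _) (he a ha).2 rfl (he a ha).1
  have hnear : ∀ u ∈ f ⁻¹' doubleStar f A e M s(a, f (e a).2),
      ∃ v ∈ f ⁻¹' {a} ∪ f ⁻¹' {f (e a).2}, G.edist u v ≤ d + 1 := by
    rintro u (hu | ⟨j, hj, hi, -, rfl⟩)
    · exact ⟨u, Sym2.mem_iff.1 hu, by simp⟩
    · exact ⟨(e (f u)).2, Sym2.mem_iff.1 hj,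
        (hA _ hi).edist_le_add_one_of_adj rfl (he _ hi).2 (he _ hi).1⟩
  have hsum : d + D + 1 + 2 * (d + 1) = D + 3 * d + 3 := by ring
  exact hsum ▸ hcore.of_forall_exists_edist_le hnear

theorem marked_components_weak_diameter_general (hD : ∀ i, WeakEDiamLE G (f ⁻¹' {i}) D)
    (hA : ∀ i ∈ A, WeakEDiamLE G (f ⁻¹' {i}) d)
    (he : ∀ i ∈ A, G.Adj (e i).1 (e i).2 ∧ f (e i).1 = i ∧ f (e i).2 ≠ i)
    (hM : IsMaximalMatchingIn (fragmentGraph f A e) (selectedEdges f A e) M)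
    (C : (SimpleGraph.fromEdgeSet (markedEdges f A e M)).ConnectedComponent) :
    (C.supp \ A).Subsingleton ∧ WeakEDiamLE G (⋃ i ∈ C.supp, f ⁻¹' {i}) (D + 3 * d + 3) := by
  rw [Set.biUnion_preimage_singleton]
  rcases supp_subsingleton_or_subset_doubleStar hM (fun i hi => (he i hi).2) C with
    hsingle | ⟨a, ha, hstar⟩
  · obtain ⟨i, hi⟩ := C.nonempty_supp
    refine ⟨hsingle.anti Set.sdiff_subset, (hD i).mono ?_ ?_⟩
    · exact Set.preimage_mono fun j hj => hsingle hj hi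
    · exact le_self_add.trans le_self_add
  · refine ⟨Set.subsingleton_singleton.anti <|
      (Set.sdiff_subset_sdiff_left hstar).trans (doubleStar_sdiff_subset ha), ?_⟩
    have hdiam := weakEDiamLE_preimage_doubleStar (M := M) hD hA
      (fun i hi => ⟨(he i hi).1, (he i hi).2.1⟩) ha
    exact hdiam.mono (Set.preimage_mono hstar) le_rfl

end Fragments

/-- Let `G` be connected, with all parts inducing connected subgraphs of weak diameter
at most `D₀`, let `d ≤ D₀`, let `A` be the set of parts of weak diameter at most `d`,
with a selected outgoing edge for each part of `A`, and let `K` be the marked edge set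
obtained from a maximal matching `M ⊆ S` of the fragment graph. Then every connected
component `C` of the spanning subgraph of `H` with edge set `K` satisfies:
(a) `C` contains at most one part of weak diameter greater than `d`, and
(b) the union of the parts lying in `C` has weak diameter at most `D₀ + 3d + 3` in `G`. -/
theorem marked_components_weak_diameter {V ι : Type*} [Fintype V]
    (G : SimpleGraph V) (hG : G.Connected)
    (f : V → ι) (hf : Function.Surjective f)
    (D₀ d : ℕ) (hdD : d ≤ D₀)
    (hpartconn : ∀ i : ι, (G.induce (f ⁻¹' {i})).Connected)
    (hpartdiam : ∀ i : ι, WeakDiamLE G (f ⁻¹' {i}) D₀)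
    (A : Set ι) (hA : A = {i : ι | WeakDiamLE G (f ⁻¹' {i}) d})
    (e : ι → V × V)
    (he : ∀ i ∈ A, G.Adj (e i).1 (e i).2 ∧ f (e i).1 = i ∧ f (e i).2 ≠ i)
    (M : Set (Sym2 ι))
    (hM : IsMatchingIn (fragmentGraph f A e) M)
    (hMS : M ⊆ selectedEdges f A e)
    (hmax : ∀ M' : Set (Sym2 ι), IsMatchingIn (fragmentGraph f A e) M' →
      M' ⊆ selectedEdges f A e → M ⊆ M' → M' = M)
    (K : Set (Sym2 ι)) (hK : K = markedEdges f A e M) :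
    ∀ C : (SimpleGraph.fromEdgeSet K).ConnectedComponent,
      (∀ i ∈ C.supp, ∀ j ∈ C.supp,
        ¬ WeakDiamLE G (f ⁻¹' {i}) d → ¬ WeakDiamLE G (f ⁻¹' {j}) d → i = j) ∧
      WeakDiamLE G (⋃ i ∈ C.supp, f ⁻¹' {i}) (D₀ + 3 * d + 3) := by
  subst hA hK
  intro C
  obtain ⟨hlarge, hdiam⟩ := marked_components_weak_diameter_general
    (fun i => (weakEDiamLE_natCast_iff hG.preconnected).2 (hpartdiam i))
    (fun i hi => (weakEDiamLE_natCast_iff hG.preconnected).2 hi) he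
    ⟨⟨hM, hMS⟩, fun N hN hMN => (hmax N hN.1 hN.2 hMN).le⟩ C
  exact ⟨fun i hi j hj hid hjd => hlarge ⟨hi, hid⟩ ⟨hj, hjd⟩,
    (weakEDiamLE_natCast_iff hG.preconnected).1 (mod_cast hdiam)⟩
end
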